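/- arXiv:1308.1069 — 2 statements merged into one kernel-verified Lean document; each statement's English description precedes it below -/
import Mathlib

section
/- There exists a universal constant C > 0 (independent of the graph and the group) such that the following holds. Suppose V is infinite. If E ⊆ V is a set with |E| ≤ Γ(r) for some real r ≥ 1, then for every finitely supported f : V → ℝ one has Σ_{m∈E} |f(m)| ≤ C · r · Σ_{m∈V} |∇f|(m). -/
/-!
By a co-area argument (`coarea`) the estimate reduces to indicators of finite sets `F`, that is, to
the isoperimetric bound `|E ∩ F| ≤ 16 ρ |∂F|` with `ρ = ⌈r⌉` (`card_inter_le`), where `∂F` is the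
set of oriented edges leaving `F`. Two cases are distinguished.

* Some automorphism-invariant relation on edges has different in- and out-degrees (the
  non-unimodular case). It is then a flow with constant nonzero integer divergence, which has to
  leave or enter `F` through its boundary, so `|F| ≤ |∂F|`.
* Every invariant edge relation is balanced (`EdgeBalanced`). Then the mass-transport principle
  holds for edges (`EdgeBalanced.transport`). From every vertex `x` a unit of mass is sent to every
  `n` with `d(x, n) < R`, each step going to a uniformly chosen neighbour closer to `n`. By mass
  transport the total mass at any vertex stays at most `Γ(R)`, so during the `R` steps at most
  `R Γ(R)` units cross any given oriented edge. At least `|F| (Γ(R) - |F|)` units have to leave `F`,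
  so `|F| ≤ 2 R |∂F|` as soon as `2 |F| ≤ Γ(R)`.

In the second case `R` is chosen minimal with `2 |F| ≤ Γ(R)`. If `R ≤ 2ρ` this suffices; otherwise
the bound `k Γ(ρ) ≤ Γ(2ρk)` (`mul_gball_le`), valid because `V` is infinite, shows that `|F| / R` is
at least a constant times `Γ(ρ) / ρ ≥ |E| / ρ`.
-/

open scoped BigOperators

/-- The (modulus of the) graph gradient: `|∇f|(m) = ∑_{n ∼ m} |f(m) - f(n)|`. -/
noncomputable def gradAbs {V : Type} (G : SimpleGraph V) (f : V → ℝ) (m : V) : ℝ :=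
  ∑ᶠ n ∈ G.neighborSet m, |f m - f n|

section Helpers

open Finset
open scoped ENNReal Classical

variable {V : Type} {G : SimpleGraph V}

/-! ### Distances and balls -/

lemma exists_adj_dist_pred (hc : G.Connected) {x n : V} (h : x ≠ n) :
    ∃ y, G.Adj x y ∧ G.dist y n + 1 = G.dist x n := by
  obtain ⟨p, hp⟩ := hc.exists_walk_length_eq_dist x n
  cases p with
  | nil => exact absurd rfl h
  | cons hadj q =>
    rename_i y
    refine ⟨y, hadj, ?_⟩
    have h1 : G.dist y n ≤ q.length := SimpleGraph.dist_le q
    have h2 : G.dist x n ≤ G.dist x y + G.dist y n := hc.dist_triangle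
    have h3 : G.dist x y = 1 := SimpleGraph.dist_eq_one_iff_adj.2 hadj
    simp only [SimpleGraph.Walk.length_cons] at hp
    omega

lemma dist_iso (hc : G.Connected) (φ : G ≃g G) (x y : V) :
    G.dist (φ x) (φ y) = G.dist x y := by
  have key : ∀ (ψ : G ≃g G) (a b : V), G.dist (ψ a) (ψ b) ≤ G.dist a b := by
    intro ψ a b
    obtain ⟨p, hp⟩ := hc.exists_walk_length_eq_dist a b
    have := SimpleGraph.dist_le (p.map ψ.toHom)
    rw [SimpleGraph.Walk.length_map, hp] at this
    exact this
  refine le_antisymm (key φ x y) ?_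
  simpa using key φ.symm (φ x) (φ y)

/-- The open ball of integer radius `R` about `o` in the graph distance. -/
def gball (G : SimpleGraph V) (o : V) (R : ℕ) : Set V := {n | G.dist o n < R}

lemma gball_finite [G.LocallyFinite] (hc : G.Connected) (o : V) (R : ℕ) :
    (gball G o R).Finite := by
  induction R with
  | zero => simp [gball]
  | succ R ih =>
    refine ((ih.biUnion (t := fun v => (G.neighborFinset v : Set V))
      (fun v _ => Finset.finite_toSet _)).union (Set.finite_singleton o)).subset ?_
    intro n hn
    by_cases h : n = o
    · right; exact h
    left
    obtain ⟨y, hy, hd⟩ := exists_adj_dist_pred hc h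
    simp only [gball, Set.mem_ofPred_eq] at hn
    rw [SimpleGraph.dist_comm] at hn
    simp only [Set.mem_iUnion]
    refine ⟨y, ?_, ?_⟩
    · simp only [gball, Set.mem_ofPred_eq]
      rw [SimpleGraph.dist_comm]; omega
    · simpa using hy.symm

lemma gball_ncard_eq (hc : G.Connected) (ht : ∀ u v : V, ∃ φ : G ≃g G, φ u = v)
    (x y : V) (R : ℕ) : (gball G x R).ncard = (gball G y R).ncard := by
  obtain ⟨φ, rfl⟩ := ht x y
  have : gball G (φ x) R = φ '' gball G x R := by
    ext n
    constructor
    · intro hn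
      refine ⟨φ.symm n, ?_, by simp⟩
      have h := dist_iso hc φ x (φ.symm n)
      simp only [RelIso.apply_symm_apply] at h
      simpa [gball, ← h] using hn
    · rintro ⟨m, hm, rfl⟩
      simpa [gball, dist_iso hc] using hm
  rw [this, Set.ncard_image_of_injective _ φ.injective]

lemma exists_vertex_dist_eq [G.LocallyFinite] [Infinite V] (hc : G.Connected) (o : V) (s : ℕ) :
    ∃ v, G.dist o v = s := by
  have h1 : ∀ k v, G.dist o v = s + k → ∃ v, G.dist o v = s := by
    intro k
    induction k with
    | zero => exact fun v hv => ⟨v, hv⟩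
    | succ k ih =>
      intro v hv
      have hne : v ≠ o := by
        rintro rfl
        simp at hv
      obtain ⟨y, -, hy⟩ := exists_adj_dist_pred hc hne
      refine ih y ?_
      rw [SimpleGraph.dist_comm (u := v), SimpleGraph.dist_comm (u := y)] at hy
      omega
  obtain ⟨v, hv⟩ := (gball_finite hc o s).exists_notMem
  simp only [gball, Set.mem_ofPred_eq, not_lt] at hv
  exact h1 (G.dist o v - s) v (by omega)

/-- The ball of radius `s + 2ρ` contains, besides the concentric ball of radius `s`, a disjoint
ball of radius `ρ` centred on the sphere of radius `s + ρ`. -/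
lemma gball_add_le [G.LocallyFinite] [Infinite V] (hc : G.Connected)
    (ht : ∀ u v : V, ∃ φ : G ≃g G, φ u = v) (o : V) (s ρ : ℕ) :
    (gball G o s).ncard + (gball G o ρ).ncard ≤ (gball G o (s + 2 * ρ)).ncard := by
  obtain ⟨v, hv⟩ := exists_vertex_dist_eq hc o (s + ρ)
  rw [gball_ncard_eq hc ht o v ρ, ← Set.ncard_union_eq ?_ (gball_finite hc _ _)
    (gball_finite hc _ _)]
  · refine Set.ncard_le_ncard ?_ (gball_finite hc _ _)
    rintro n (hn | hn) <;> simp only [gball, Set.mem_ofPred_eq] at hn ⊢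
    · omega
    · have := hc.dist_triangle (u := o) (v := v) (w := n)
      omega
  · rw [Set.disjoint_left]
    intro n hn hn'
    simp only [gball, Set.mem_ofPred_eq] at hn hn'
    have := hc.dist_triangle (u := o) (v := n) (w := v)
    rw [SimpleGraph.dist_comm (u := n)] at this
    omega

lemma mul_gball_le [G.LocallyFinite] [Infinite V] (hc : G.Connected)
    (ht : ∀ u v : V, ∃ φ : G ≃g G, φ u = v) (o : V) (ρ k : ℕ) :
    k * (gball G o ρ).ncard ≤ (gball G o (2 * ρ * k)).ncard := by
  induction k with
  | zero => simp
  | succ k ih =>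
    have := gball_add_le hc ht o (2 * ρ * k) ρ
    rw [show 2 * ρ * (k + 1) = 2 * ρ * k + 2 * ρ by ring, add_mul, one_mul]
    omega

lemma gball_unbounded [G.LocallyFinite] [Infinite V] (hc : G.Connected)
    (ht : ∀ u v : V, ∃ φ : G ≃g G, φ u = v) (o : V) (N : ℕ) :
    ∃ R, N ≤ (gball G o R).ncard := by
  refine ⟨2 * 1 * N, le_trans ?_ (mul_gball_le hc ht o 1 N)⟩
  have : 0 < (gball G o 1).ncard := by
    rw [Set.ncard_pos (gball_finite hc _ _)]
    exact ⟨o, by simp [gball]⟩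
  nlinarith

/-! ### Edge boundaries and balanced edge relations -/

/-- The number of oriented edges leaving the finite set `F`. -/
noncomputable def edgeBd (G : SimpleGraph V) [G.LocallyFinite] (F : Finset V) : ℕ :=
  ∑ x ∈ F, #{y ∈ G.neighborFinset x | y ∉ F}

/-- A combinatorial form of unimodularity: every automorphism-invariant relation has equal
out-degree and in-degree along the edges at each vertex. -/
def EdgeBalanced (G : SimpleGraph V) [G.LocallyFinite] : Prop :=
  ∀ S : V → V → Prop, (∀ (φ : G ≃g G) u v, S (φ u) (φ v) ↔ S u v) →
    ∀ x, #{y ∈ G.neighborFinset x | S x y} = #{y ∈ G.neighborFinset x | S y x}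

lemma sum_nbr_iso [G.LocallyFinite] {M : Type*} [AddCommMonoid M] (φ : G ≃g G) (x : V)
    (f : V → M) :
    ∑ y ∈ G.neighborFinset (φ x), f y = ∑ y ∈ G.neighborFinset x, f (φ y) := by
  symm
  refine Finset.sum_equiv φ.toEquiv ?_ ?_
  · intro i
    simp only [SimpleGraph.mem_neighborFinset]
    exact φ.map_adj_iff.symm
  · intro i _
    rfl

lemma card_nbr_iso [G.LocallyFinite] (φ : G ≃g G) (x : V) (p : V → Prop) :
    #{y ∈ G.neighborFinset (φ x) | p y} = #{y ∈ G.neighborFinset x | p (φ y)} := by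
  simp only [Finset.card_filter]
  exact sum_nbr_iso φ x _

lemma sum_sum_nbr_comm [G.LocallyFinite] {M : Type*} [AddCommMonoid M] (F : Finset V)
    (f : V → V → M) :
    ∑ x ∈ F, ∑ y ∈ G.neighborFinset x with y ∈ F, f x y
      = ∑ y ∈ F, ∑ x ∈ G.neighborFinset y with x ∈ F, f x y := by
  refine Finset.sum_comm' ?_
  intro x y
  simp only [Finset.mem_filter, SimpleGraph.mem_neighborFinset, G.adj_comm x y]
  tauto

/-- If some invariant relation is unbalanced, it carries a net flow of at least one unit out of (or
into) every vertex, so a finite set has at least as many boundary edges as elements. -/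
lemma card_le_edgeBd_of_not_balanced [G.LocallyFinite]
    (ht : ∀ u v : V, ∃ φ : G ≃g G, φ u = v) (hb : ¬ EdgeBalanced G) (F : Finset V) :
    #F ≤ edgeBd G F := by
  simp only [EdgeBalanced, not_forall] at hb
  obtain ⟨S, hS, x₀, hne⟩ := hb
  set a := #{y ∈ G.neighborFinset x₀ | S x₀ y} with ha
  set b := #{y ∈ G.neighborFinset x₀ | S y x₀} with hb
  have hout : ∀ x, #{y ∈ G.neighborFinset x | S x y} = a := by
    intro x
    obtain ⟨φ, rfl⟩ := ht x₀ x
    rw [card_nbr_iso]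
    simp only [hS, ha]
  have hin : ∀ x, #{y ∈ G.neighborFinset x | S y x} = b := by
    intro x
    obtain ⟨φ, rfl⟩ := ht x₀ x
    rw [card_nbr_iso]
    simp only [hS, hb]
  have hsplit : ∀ T : V → V → Prop, ∑ x ∈ F, #{y ∈ G.neighborFinset x | T x y}
      = ∑ x ∈ F, ∑ y ∈ G.neighborFinset x with y ∈ F, (if T x y then 1 else 0)
        + ∑ x ∈ F, ∑ y ∈ G.neighborFinset x with y ∉ F, (if T x y then 1 else 0) := by
    intro T
    rw [← Finset.sum_add_distrib]
    refine Finset.sum_congr rfl fun x _ => ?_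
    rw [Finset.card_filter, Finset.sum_filter_add_sum_filter_not]
  have hbd : ∀ T : V → V → Prop,
      ∑ x ∈ F, ∑ y ∈ G.neighborFinset x with y ∉ F, (if T x y then 1 else 0) ≤ edgeBd G F := by
    intro T
    refine Finset.sum_le_sum fun x _ => ?_
    rw [Finset.card_eq_sum_ones]
    refine Finset.sum_le_sum fun y _ => ?_
    split_ifs <;> simp
  have h1 := hsplit S
  have h2 := hsplit (fun x y => S y x)
  have h3 := hbd S
  have h4 := hbd (fun x y => S y x)
  rw [sum_sum_nbr_comm] at h2
  simp only [hout, hin, Finset.sum_const, smul_eq_mul] at h1 h2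
  rcases lt_or_gt_of_ne hne with h | h
  · have : #F * (a + 1) ≤ #F * b := Nat.mul_le_mul_left _ h
    rw [mul_add] at this
    omega
  · have : #F * (b + 1) ≤ #F * a := Nat.mul_le_mul_left _ h
    rw [mul_add] at this
    omega

/-- The mass-transport principle along edges, by decomposition into the level sets of `ψ`. -/
lemma EdgeBalanced.transport [G.LocallyFinite] (hb : EdgeBalanced G) (ψ : V → V → ℝ≥0∞)
    (hψ : ∀ (φ : G ≃g G) u v, ψ (φ u) (φ v) = ψ u v) (x : V) :
    ∑ y ∈ G.neighborFinset x, ψ x y = ∑ y ∈ G.neighborFinset x, ψ y x := by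
  set N := G.neighborFinset x
  set C := N.image (fun y => ψ x y) ∪ N.image (fun y => ψ y x) with hC
  have key : ∀ g : V → ℝ≥0∞, (∀ y ∈ N, g y ∈ C) →
      ∑ y ∈ N, g y = ∑ c ∈ C, #{y ∈ N | g y = c} • c := by
    intro g hg
    rw [← Finset.sum_fiberwise_of_maps_to hg]
    refine Finset.sum_congr rfl fun c _ => ?_
    rw [← Finset.sum_const]
    refine Finset.sum_congr rfl fun y hy => ?_
    exact (Finset.mem_filter.1 hy).2
  rw [key (fun y => ψ x y), key (fun y => ψ y x)]
  · refine Finset.sum_congr rfl fun c _ => ?_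
    have h := hb (fun u v => ψ u v = c) (fun φ u v => by rw [hψ]) x
    congr 1
    convert h
  · intro y hy
    exact Finset.mem_union_right _ (Finset.mem_image_of_mem _ hy)
  · intro y hy
    exact Finset.mem_union_left _ (Finset.mem_image_of_mem _ hy)

/-! ### Transporting mass along random geodesics -/

/-- The number of neighbours of `x` that are closer to `n` than `x` is. -/
noncomputable def closerCount (G : SimpleGraph V) [G.LocallyFinite] (x n : V) : ℕ :=
  #{y ∈ G.neighborFinset x | G.dist y n + 1 = G.dist x n}

/-- For `y` adjacent to `x`, the probability of stepping from `x` to `y` when moving to a uniformly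
chosen neighbour of `x` closer to `n`. -/
noncomputable def stepProb (G : SimpleGraph V) [G.LocallyFinite] (x n y : V) : ℝ≥0∞ :=
  if G.dist y n + 1 = G.dist x n then (closerCount G x n : ℝ≥0∞)⁻¹ else 0

/-- The mass with destination `n` present at `x` at time `k`, when at time `0` every vertex
at distance less than `R` from `n` sends out a unit of mass towards `n`. Mass that has
reached its destination is discarded at the next step. -/
noncomputable def mass (G : SimpleGraph V) [G.LocallyFinite] (R : ℕ) : ℕ → V → V → ℝ≥0∞
  | 0, x, n => if G.dist x n < R then 1 else 0
  | k + 1, y, n => ∑ x ∈ G.neighborFinset y, mass G R k x n * stepProb G x n y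

lemma sum_stepProb [G.LocallyFinite] (x n : V) :
    ∑ y ∈ G.neighborFinset x, stepProb G x n y
      = (closerCount G x n : ℝ≥0∞) * (closerCount G x n : ℝ≥0∞)⁻¹ := by
  simp only [stepProb, ← Finset.sum_filter, Finset.sum_const, nsmul_eq_mul]
  rfl

lemma sum_stepProb_le [G.LocallyFinite] (x n : V) :
    ∑ y ∈ G.neighborFinset x, stepProb G x n y ≤ 1 := by
  rw [sum_stepProb]
  exact ENNReal.mul_inv_le_one _

lemma sum_stepProb_eq [G.LocallyFinite] (hc : G.Connected) {x n : V} (h : x ≠ n) :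
    ∑ y ∈ G.neighborFinset x, stepProb G x n y = 1 := by
  rw [sum_stepProb]
  refine ENNReal.mul_inv_cancel ?_ (ENNReal.natCast_ne_top _)
  obtain ⟨y, hy, hd⟩ := exists_adj_dist_pred hc h
  have : 0 < closerCount G x n := Finset.card_pos.2 ⟨y, by simp [hy, hd]⟩
  exact_mod_cast this.ne'

lemma stepProb_iso [G.LocallyFinite] (hc : G.Connected) (φ : G ≃g G) (x n y : V) :
    stepProb G (φ x) (φ n) (φ y) = stepProb G x n y := by
  have h : closerCount G (φ x) (φ n) = closerCount G x n := by
    simp only [closerCount, Finset.card_filter, sum_nbr_iso, dist_iso hc]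
  simp only [stepProb, h, dist_iso hc]

lemma mass_iso [G.LocallyFinite] (hc : G.Connected) (φ : G ≃g G) (R k : ℕ) (x n : V) :
    mass G R k (φ x) (φ n) = mass G R k x n := by
  induction k generalizing x with
  | zero => simp only [mass, dist_iso hc]
  | succ k ih => simp only [mass, sum_nbr_iso, ih, stepProb_iso hc]

lemma mass_eq_zero [G.LocallyFinite] (R k : ℕ) (x n : V) (h : R ≤ G.dist x n + k) :
    mass G R k x n = 0 := by
  induction k generalizing x with
  | zero => simp only [mass]; rw [if_neg (by omega)]
  | succ k ih =>
    simp only [mass]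
    refine Finset.sum_eq_zero fun y _ => ?_
    by_cases hd : G.dist x n + 1 = G.dist y n
    · rw [ih y (by omega), zero_mul]
    · rw [stepProb, if_neg hd, mul_zero]

/-- The total mass moving from `x` to `y` between times `k` and `k + 1`. -/
noncomputable def flow (G : SimpleGraph V) [G.LocallyFinite] (R k : ℕ) (x y : V) : ℝ≥0∞ :=
  ∑' n, mass G R k x n * stepProb G x n y

lemma flow_iso [G.LocallyFinite] (hc : G.Connected) (φ : G ≃g G) (R k : ℕ) (x y : V) :
    flow G R k (φ x) (φ y) = flow G R k x y := by
  rw [flow, ← φ.toEquiv.tsum_eq]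
  refine tsum_congr fun n => ?_
  change mass G R k (φ x) (φ n) * stepProb G (φ x) (φ n) (φ y) = _
  rw [mass_iso hc, stepProb_iso hc]

lemma sum_flow_le [G.LocallyFinite] (R k : ℕ) (x : V) :
    ∑ y ∈ G.neighborFinset x, flow G R k x y ≤ ∑' n, mass G R k x n := by
  simp only [flow]
  rw [← Summable.tsum_finsetSum (fun _ _ => ENNReal.summable)]
  refine ENNReal.tsum_le_tsum fun n => ?_
  rw [← Finset.mul_sum]
  exact mul_le_of_le_one_right' (sum_stepProb_le x n)

lemma tsum_mass_zero [G.LocallyFinite] (hc : G.Connected) (R : ℕ) (x : V) :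
    ∑' n, mass G R 0 x n = ((gball G x R).ncard : ℝ≥0∞) := by
  rw [tsum_eq_sum (s := (gball_finite hc x R).toFinset)]
  · rw [Set.ncard_eq_toFinset_card _ (gball_finite hc x R), Finset.card_eq_sum_ones]
    push_cast
    refine Finset.sum_congr rfl fun n hn => ?_
    simp only [Set.Finite.mem_toFinset, gball, Set.mem_ofPred_eq] at hn
    simp [mass, hn]
  · intro n hn
    simp only [Set.Finite.mem_toFinset, gball, Set.mem_ofPred_eq] at hn
    simp [mass, hn]

/-- By mass transport, the total mass at a vertex never exceeds its initial value. -/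
lemma tsum_mass_le [G.LocallyFinite] (hc : G.Connected) (hb : EdgeBalanced G) (R k : ℕ) (x : V) :
    ∑' n, mass G R k x n ≤ ((gball G x R).ncard : ℝ≥0∞) := by
  induction k with
  | zero => exact (tsum_mass_zero hc R x).le
  | succ k ih =>
    refine le_trans ?_ ih
    refine le_trans (le_of_eq ?_) (sum_flow_le R k x)
    rw [hb.transport (flow G R k) (fun φ u v => flow_iso hc φ R k u v)]
    simp only [flow, mass]
    rw [← Summable.tsum_finsetSum (fun _ _ => ENNReal.summable)]

/-- The mass inside `F` with destination outside `F`, at time `k`. -/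
noncomputable def pending (G : SimpleGraph V) [G.LocallyFinite] (R : ℕ) (F : Finset V) (k : ℕ) :
    ℝ≥0∞ :=
  ∑' n, if n ∈ F then 0 else ∑ x ∈ F, mass G R k x n

lemma pending_step [G.LocallyFinite] (hc : G.Connected)
    (ht : ∀ u v : V, ∃ φ : G ≃g G, φ u = v) (hb : EdgeBalanced G) (o : V) (R : ℕ)
    (F : Finset V) (k : ℕ) :
    pending G R F k ≤ pending G R F (k + 1) + edgeBd G F * (gball G o R).ncard := by
  have hcross : ∑' n, ∑ x ∈ F, ∑ y ∈ G.neighborFinset x with y ∉ F,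
      mass G R k x n * stepProb G x n y ≤ edgeBd G F * (gball G o R).ncard := by
    rw [Summable.tsum_finsetSum (fun _ _ => ENNReal.summable), edgeBd]
    push_cast
    rw [Finset.sum_mul]
    refine Finset.sum_le_sum fun x _ => ?_
    rw [Summable.tsum_finsetSum (fun _ _ => ENNReal.summable), ← nsmul_eq_mul]
    refine Finset.sum_le_card_nsmul _ _ _ fun y hy => ?_
    have hy' : y ∈ G.neighborFinset x := (Finset.mem_filter.1 hy).1
    calc flow G R k x y ≤ ∑ y ∈ G.neighborFinset x, flow G R k x y :=
          Finset.single_le_sum (f := fun y => flow G R k x y) (fun _ _ => zero_le) hy'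
      _ ≤ ∑' n, mass G R k x n := sum_flow_le R k x
      _ ≤ _ := tsum_mass_le hc hb R k x
      _ = _ := by rw [gball_ncard_eq hc ht x o]
  refine le_trans ?_ (add_le_add_right hcross _)
  rw [pending, pending, ← ENNReal.tsum_add]
  refine ENNReal.tsum_le_tsum fun n => ?_
  split_ifs with hn
  · exact zero_le
  have h1 : ∑ x ∈ F, mass G R k x n
      = ∑ x ∈ F, ∑ y ∈ G.neighborFinset x with y ∈ F, mass G R k x n * stepProb G x n y
      + ∑ x ∈ F, ∑ y ∈ G.neighborFinset x with y ∉ F, mass G R k x n * stepProb G x n y := by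
    rw [← Finset.sum_add_distrib]
    refine Finset.sum_congr rfl fun x hx => ?_
    rw [Finset.sum_filter_add_sum_filter_not, ← Finset.mul_sum,
      sum_stepProb_eq hc (by rintro rfl; exact hn hx), mul_one]
  rw [h1, sum_sum_nbr_comm]
  refine add_le_add_left ?_ _
  refine Finset.sum_le_sum fun y _ => ?_
  exact Finset.sum_le_sum_of_subset (Finset.filter_subset _ _)

lemma pending_zero_le [G.LocallyFinite] (hc : G.Connected)
    (ht : ∀ u v : V, ∃ φ : G ≃g G, φ u = v) (hb : EdgeBalanced G) (o : V) (R : ℕ)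
    (F : Finset V) :
    pending G R F 0 ≤ R * (edgeBd G F * (gball G o R).ncard) := by
  have h : ∀ k : ℕ, pending G R F 0
      ≤ pending G R F k + k * (edgeBd G F * (gball G o R).ncard) := by
    intro k
    induction k with
    | zero => simp
    | succ k ih =>
      refine ih.trans ?_
      refine (add_le_add_left (pending_step hc ht hb o R F k) _).trans (le_of_eq ?_)
      push_cast
      ring
  refine (h R).trans (le_of_eq ?_)
  have : pending G R F R = 0 := by
    simp [pending, mass_eq_zero]
  rw [this, zero_add]

lemma le_pending_zero [G.LocallyFinite] (hc : G.Connected)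
    (ht : ∀ u v : V, ∃ φ : G ≃g G, φ u = v) (o : V) (R : ℕ) (F : Finset V) :
    (#F : ℝ≥0∞) * (gball G o R).ncard ≤ pending G R F 0 + #F * #F := by
  have h0 : pending G R F 0 = ∑ x ∈ F, ∑' n, if n ∈ F then 0 else mass G R 0 x n := by
    rw [← Summable.tsum_finsetSum (fun _ _ => ENNReal.summable), pending]
    refine tsum_congr fun n => ?_
    split_ifs <;> simp
  rw [h0, ← nsmul_eq_mul, ← nsmul_eq_mul, ← Finset.sum_const, ← Finset.sum_const,
    ← Finset.sum_add_distrib]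
  refine Finset.sum_le_sum fun x _ => ?_
  have h1 : (#F : ℝ≥0∞) = ∑' n, if n ∈ F then 1 else 0 := by
    rw [tsum_eq_sum (s := F)]
    · simp
    · intro n hn
      simp [hn]
  rw [gball_ncard_eq hc ht o x, ← tsum_mass_zero hc, h1, ← ENNReal.tsum_add]
  refine ENNReal.tsum_le_tsum fun n => ?_
  split_ifs
  · simp only [mass, zero_add]
    split_ifs <;> simp
  · simp

/-! ### Isoperimetry -/

lemma card_le_of_balanced [G.LocallyFinite] (hc : G.Connected)
    (ht : ∀ u v : V, ∃ φ : G ≃g G, φ u = v) (hb : EdgeBalanced G) (o : V) (R : ℕ)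
    (F : Finset V) (hF : F.Nonempty) (hR : 2 * #F ≤ (gball G o R).ncard) :
    #F ≤ 2 * R * edgeBd G F := by
  have h := (le_pending_zero hc ht o R F).trans
    (add_le_add_left (pending_zero_le hc ht hb o R F) _)
  have h' : #F * (gball G o R).ncard ≤ R * (edgeBd G F * (gball G o R).ncard) + #F * #F := by
    exact_mod_cast h
  have hpos : 0 < #F := Finset.card_pos.2 hF
  set g := (gball G o R).ncard
  have hg : 0 < g := by omega
  have h2 : #F * (2 * #F) ≤ #F * g := Nat.mul_le_mul_left _ hR
  refine Nat.le_of_mul_le_mul_right ?_ hg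
  nlinarith

/-- The isoperimetric estimate: a set `E` no larger than a ball of radius `ρ` meets `F` in at most
`16 ρ |∂F|` points. -/
lemma card_inter_le [G.LocallyFinite] [Infinite V] (hc : G.Connected)
    (ht : ∀ u v : V, ∃ φ : G ≃g G, φ u = v) (o : V) (ρ : ℕ) (hρ : 1 ≤ ρ) (E F : Finset V)
    (hE : #E ≤ (gball G o ρ).ncard) :
    #(E ∩ F) ≤ 16 * ρ * edgeBd G F := by
  have hEF : #(E ∩ F) ≤ #F := Finset.card_le_card Finset.inter_subset_right
  have hEE : #(E ∩ F) ≤ #E := Finset.card_le_card Finset.inter_subset_left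
  by_cases hb : EdgeBalanced G
  swap
  · have := card_le_edgeBd_of_not_balanced ht hb F
    nlinarith
  rcases F.eq_empty_or_nonempty with rfl | hF
  · simp
  -- `R` is the least radius whose ball has at least twice the size of `F`.
  have hex := gball_unbounded hc ht o (2 * #F)
  set R := Nat.find hex with hRdef
  have hR : 2 * #F ≤ (gball G o R).ncard := Nat.find_spec hex
  have hF0 : 0 < #F := Finset.card_pos.2 hF
  have hRpos : 0 < R := by
    by_contra h0
    have : R = 0 := by omega
    rw [this] at hR
    simp [gball] at hR
    exact hF.ne_empty hR
  have hlt : (gball G o (R - 1)).ncard < 2 * #F :=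
    not_le.1 (Nat.find_min hex (show R - 1 < R by omega))
  have hiso := card_le_of_balanced hc ht hb o R F hF hR
  set k := (R - 1) / (2 * ρ) with hk
  have hk1 : 2 * ρ * k ≤ R - 1 := Nat.mul_div_le _ _
  have hk2 : R - 1 < 2 * ρ * (k + 1) := Nat.lt_mul_div_succ _ (by omega)
  have hR2 : R ≤ 2 * ρ * (k + 1) := by omega
  have hiso2 : #F ≤ 2 * (2 * ρ * (k + 1)) * edgeBd G F :=
    hiso.trans (Nat.mul_le_mul_right _ (Nat.mul_le_mul_left _ hR2))
  rcases Nat.eq_zero_or_pos k with h0 | hkpos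
  · rw [h0] at hiso2
    nlinarith
  · have h1 := mul_gball_le hc ht o ρ k
    have h2 : (gball G o (2 * ρ * k)).ncard ≤ (gball G o (R - 1)).ncard := by
      refine Set.ncard_le_ncard ?_ (gball_finite hc _ _)
      intro n hn
      simp only [gball, Set.mem_ofPred_eq] at hn ⊢
      omega
    have h3 : k * #(E ∩ F) ≤ k * (gball G o ρ).ncard :=
      Nat.mul_le_mul_left _ (hEE.trans hE)
    have h4 : k * #(E ∩ F) ≤ 2 * (2 * (2 * ρ * (k + 1)) * edgeBd G F) := by omega
    refine Nat.le_of_mul_le_mul_left ?_ hkpos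
    have h5 : (k + 1) * (ρ * edgeBd G F) ≤ (2 * k) * (ρ * edgeBd G F) :=
      Nat.mul_le_mul_right _ (by omega)
    nlinarith

/-! ### From sets to functions -/

lemma gradAbs_eq_sum [G.LocallyFinite] (f : V → ℝ) (m : V) :
    gradAbs G f m = ∑ n ∈ G.neighborFinset m, |f m - f n| := by
  rw [gradAbs, ← finsum_mem_coe_finset]
  simp

lemma gradAbs_nonneg [G.LocallyFinite] (f : V → ℝ) (m : V) : 0 ≤ gradAbs G f m := by
  rw [gradAbs_eq_sum]
  exact Finset.sum_nonneg fun _ _ => abs_nonneg _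

lemma gradAbs_support_finite [G.LocallyFinite] (f : V → ℝ) (hf : (Function.support f).Finite) :
    (Function.support (gradAbs G f)).Finite := by
  refine (hf.union (hf.biUnion (t := fun v => (G.neighborFinset v : Set V))
      (fun v _ => Finset.finite_toSet _))).subset ?_
  intro m hm
  by_contra hcon
  simp only [Set.mem_union, Set.mem_iUnion, not_or, not_exists, Function.mem_support, not_not,
    Finset.mem_coe, SimpleGraph.mem_neighborFinset] at hcon
  refine hm ?_
  rw [gradAbs_eq_sum]
  refine Finset.sum_eq_zero fun n hn => ?_
  have hn0 : f n = 0 := by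
    by_contra hne
    exact hcon.2 n hne ((G.mem_neighborFinset _ _).1 hn).symm
  rw [hcon.1, hn0]
  simp

lemma edgeBd_le [G.LocallyFinite] (F : Finset V) :
    (edgeBd G F : ℝ) ≤ ∑ᶠ m, gradAbs G (fun x => if x ∈ F then 1 else 0) m := by
  set f : V → ℝ := fun x => if x ∈ F then 1 else 0 with hf
  have hfs : (Function.support f).Finite := by
    refine F.finite_toSet.subset fun x hx => ?_
    by_contra h
    exact hx (if_neg h)
  have hfin := gradAbs_support_finite (G := G) f hfs
  rw [finsum_eq_sum_of_support_subset (s := hfin.toFinset ∪ F) _ (by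
    intro x hx
    simp only [Finset.coe_union, Set.Finite.coe_toFinset]
    exact Or.inl hx)]
  refine le_trans ?_ (Finset.sum_le_sum_of_subset_of_nonneg Finset.subset_union_right
    (fun _ _ _ => gradAbs_nonneg _ _))
  rw [edgeBd]
  push_cast
  refine Finset.sum_le_sum fun x hx => ?_
  rw [gradAbs_eq_sum, Finset.card_filter]
  push_cast
  refine Finset.sum_le_sum fun y _ => ?_
  by_cases hy : y ∈ F <;> simp [hf, hx, hy]

/-- The co-area argument: an estimate for indicators of finite sets extends to nonnegative finitely
supported functions, by peeling off the lowest layer `t · 1_{supp f}` and using that the total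
gradient is additive along this decomposition. -/
lemma coarea [G.LocallyFinite] (E : Finset V) (K : ℝ)
    (hK : ∀ F : Finset V, (#(E ∩ F) : ℝ)
      ≤ K * ∑ᶠ m, gradAbs G (fun x => if x ∈ F then 1 else 0) m) :
    ∀ (N : ℕ) (f : V → ℝ) (S : Finset V), #S = N → (∀ x, 0 ≤ f x) → (∀ x, x ∈ S ↔ f x ≠ 0) →
      ∑ m ∈ E, f m ≤ K * ∑ᶠ m, gradAbs G f m := by
  intro N
  induction N using Nat.strong_induction_on with
  | _ N ih =>
  intro f S hSN hf0 hS
  rcases S.eq_empty_or_nonempty with rfl | hne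
  · have hz : f = fun _ => 0 := by
      funext x
      by_contra h
      simpa using (hS x).2 h
    subst hz
    simp [gradAbs_eq_sum]
  obtain ⟨x₀, hx₀, hmin⟩ := S.exists_min_image f hne
  set t := f x₀ with ht
  set i : V → ℝ := fun x => if x ∈ S then 1 else 0 with hi
  set g : V → ℝ := fun x => f x - t * i x with hg
  have htpos : 0 < t := lt_of_le_of_ne (hf0 _) (Ne.symm ((hS x₀).1 hx₀))
  have hfz : ∀ x, x ∉ S → f x = 0 := fun x hx => by
    by_contra h
    exact hx ((hS x).2 h)
  have hg0 : ∀ x, 0 ≤ g x := by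
    intro x
    by_cases hx : x ∈ S
    · simp [hg, hi, hx, hmin x hx]
    · simp [hg, hi, hx, hfz x hx]
  have hgsub : S.filter (fun x => g x ≠ 0) ⊂ S := by
    refine Finset.filter_ssubset.2 ⟨x₀, hx₀, ?_⟩
    simp [hg, hi, hx₀, ← ht]
  have hgS : ∀ x, x ∈ S.filter (fun x => g x ≠ 0) ↔ g x ≠ 0 := by
    intro x
    simp only [Finset.mem_filter, and_iff_right_iff_imp]
    intro h
    by_contra hx
    exact h (by simp [hg, hi, hx, hfz x hx])
  have hIH := ih _ (hSN ▸ Finset.card_lt_card hgsub) g _ rfl hg0 hgS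
  have hpt : ∀ x y, |f x - f y| = t * |i x - i y| + |g x - g y| := by
    intro x y
    by_cases hx : x ∈ S <;> by_cases hy : y ∈ S
    · simp [hg, hi, hx, hy]
    · have := hmin x hx
      simp only [hg, hi, hx, hy, hfz y hy, if_true, if_false]
      rw [abs_of_nonneg (by linarith), abs_of_nonneg (by norm_num), abs_of_nonneg (by linarith)]
      ring
    · have := hmin y hy
      simp only [hg, hi, hx, hy, hfz x hx, if_true, if_false]
      rw [abs_of_nonpos (by linarith), abs_of_nonpos (by norm_num), abs_of_nonpos (by linarith)]
      ring
    · simp [hg, hi, hx, hy, hfz x hx, hfz y hy]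
  have hgrad : ∀ m, gradAbs G f m = t * gradAbs G i m + gradAbs G g m := by
    intro m
    simp only [gradAbs_eq_sum, hpt, Finset.sum_add_distrib, Finset.mul_sum]
  have hifin : (Function.support i).Finite := by
    refine S.finite_toSet.subset fun x hx => ?_
    by_contra h
    exact hx (if_neg h)
  have hgfin : (Function.support g).Finite := by
    refine (S.filter (fun x => g x ≠ 0)).finite_toSet.subset fun x hx => ?_
    exact (hgS x).2 hx
  have hi1 := gradAbs_support_finite (G := G) i hifin
  have hg1 := gradAbs_support_finite (G := G) g hgfin
  have hsum : ∑ᶠ m, gradAbs G f m = t * ∑ᶠ m, gradAbs G i m + ∑ᶠ m, gradAbs G g m := by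
    simp only [hgrad]
    rw [finsum_add_distrib _ hg1, mul_finsum]
    exact hi1.subset fun x hx => right_ne_zero_of_mul hx
  have hfi : ∑ m ∈ E, f m = t * #(E ∩ S) + ∑ m ∈ E, g m := by
    have : ∑ m ∈ E, i m = #(E ∩ S) := by
      simp [hi]
    rw [← this, Finset.mul_sum, ← Finset.sum_add_distrib]
    exact Finset.sum_congr rfl fun x _ => by simp [hg]
  rw [hfi, hsum]
  have := mul_le_mul_of_nonneg_left (hK S) htpos.le
  linarith

end Helpers

/-- Gradient estimate (Lemma "Faris", discrete infinite case): there is a universal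
constant `C > 0` such that on every connected, locally finite, countable,
vertex-transitive graph with infinite vertex set, if `E ⊆ V` has cardinality at most
that of a ball of radius `r` (for some real `r ≥ 1`), then
`∑_{m ∈ E} |f(m)| ≤ C r ∑_{m ∈ V} |∇f|(m)` for every finitely supported `f`. -/
theorem discrete_gradient_estimate_infinite :
    ∃ C : ℝ, 0 < C ∧
      ∀ (V : Type) (G : SimpleGraph V), Countable V → G.Connected →
        (∀ v : V, (G.neighborSet v).Finite) →
        (∀ u v : V, ∃ φ : G ≃g G, φ u = v) →
        Infinite V →
        ∀ (E : Set V) (r : ℝ), 1 ≤ r →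
        (∀ m₀ : V, E.encard ≤ {n | (G.dist m₀ n : ℝ) < r}.encard) →
        ∀ f : V → ℝ, (Function.support f).Finite →
          (∑ᶠ m ∈ E, |f m|) ≤ C * r * ∑ᶠ m, gradAbs G f m := by
  classical
  refine ⟨32, by norm_num, ?_⟩
  intro V G _ hc hfin ht _ E r hr hE f hf
  have : G.LocallyFinite := fun v => (hfin v).fintype
  obtain ⟨o⟩ := hc.nonempty
  set ρ := ⌈r⌉₊ with hρ
  have hball : {n | (G.dist o n : ℝ) < r} = gball G o ρ := by
    ext n
    simp only [gball, Set.mem_ofPred_eq, hρ, Nat.lt_ceil]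
  have hEo := hE o
  rw [hball] at hEo
  have hEfin : E.Finite :=
    Set.encard_lt_top_iff.1 (hEo.trans_lt (gball_finite hc o ρ).encard_lt_top)
  have hρ1 : 1 ≤ ρ := Nat.one_le_ceil_iff.2 (by linarith)
  have hρ2 : (ρ : ℝ) ≤ 2 * r := by
    have := Nat.ceil_lt_add_one (show 0 ≤ r by linarith)
    linarith
  have hcard : hEfin.toFinset.card ≤ (gball G o ρ).ncard := by
    rw [← Set.ncard_eq_toFinset_card _ hEfin]
    rw [← hEfin.cast_ncard_eq, ← (gball_finite hc o ρ).cast_ncard_eq] at hEo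
    exact_mod_cast hEo
  have hK : ∀ F : Finset V, ((hEfin.toFinset ∩ F).card : ℝ)
      ≤ (32 * r) * ∑ᶠ m, gradAbs G (fun x => if x ∈ F then 1 else 0) m := by
    intro F
    have h1 : ((hEfin.toFinset ∩ F).card : ℝ) ≤ 16 * ρ * edgeBd G F := by
      exact_mod_cast card_inter_le hc ht o ρ hρ1 hEfin.toFinset F hcard
    refine h1.trans (mul_le_mul (by linarith) ?_ (Nat.cast_nonneg _) (by linarith))
    convert edgeBd_le (G := G) F
  have habs : (Function.support fun x => |f x|).Finite := by
    simpa [Function.support] using hf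
  have hmain := coarea (G := G) hEfin.toFinset (32 * r) (by convert hK) _ (fun x => |f x|)
    habs.toFinset rfl (fun x => abs_nonneg _) (by intro x; simp)
  have hle : ∑ᶠ m, gradAbs G (fun x => |f x|) m ≤ ∑ᶠ m, gradAbs G f m := by
    refine finsum_le_finsum' (gradAbs_support_finite _ habs) (gradAbs_support_finite _ hf) ?_
    intro m
    simp only [gradAbs_eq_sum]
    exact Finset.sum_le_sum fun n _ => abs_abs_sub_abs_le_abs_sub _ _
  rw [finsum_mem_eq_finite_toFinset_sum _ hEfin]
  exact hmain.trans (mul_le_mul_of_nonneg_left hle (by linarith))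
end

section
/- Suppose V is infinite. If E ⊆ V is a set with |E| ≤ Γ(r)/2 for some real r ≥ 1, then |E| ≤ r · ‖∂E‖, where ‖∂E‖ is the edge-perimeter of E. -/
/-!
The perimeter counts every edge between `E` and its complement twice, so with `∂` the set of
oriented edges leaving `E` the claim reads `|E| ≤ 2 r |∂|`. Consider the orbits of oriented edges
under the automorphism group. In the orbit of `(x, y)` every vertex has the same out-degree `a`
and the same in-degree `b`.

If `a ≠ b` for some orbit (the automorphism group is then not unimodular), comparing the edges of
the orbit that start in `E` with those that end in `E` gives `|a - b| |E| ≤ |∂|`, hence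
`|E| ≤ |∂|` (`unbalanced_expand`).

If `a = b` for all orbits, one averages over the group as for Cayley graphs. To stay with finite
counts, the group is replaced by the set of restrictions `q` of automorphisms to a large ball
about `o`. The number of `q` with `q z = v` is then a constant `N`, independent of `z` in the ball
and of `v` (`fib_ncard_const`). Following the image of a geodesic from `o` to `z`, the number of
`q` with `q o ∈ E` and `q z ∉ E` is at most `d(o, z) N |∂|` (`cross_le`). On the other hand, each
of the `N |E|` maps `q` with `q o ∈ E` is injective and so sends at least `|B(o, r)| - |E|`,
thus at least half, of the points of `B(o, r)` outside `E`. Summing over `z ∈ B(o, r)` gives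
`N |E| |B(o, r)| / 2 ≤ |B(o, r)| r N |∂|` (`balanced_expand`).
-/

open scoped BigOperators

/-- The edge-perimeter `‖∂A‖ = ∑_{m ∈ V} |∇1_A|(m)` of a set of vertices. -/
noncomputable def edgePerim {V : Type} (G : SimpleGraph V) (A : Set V) : ℝ :=
  ∑ᶠ m, gradAbs G (A.indicator (fun _ => (1 : ℝ))) m

/-- The oriented edges of `G` leaving `E`. -/
def outBoundary {V : Type} (G : SimpleGraph V) (E : Set V) : Set (V × V) :=
  {p | G.Adj p.1 p.2 ∧ p.1 ∈ E ∧ p.2 ∉ E}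

/-- The pair `(v, w)` is in the orbit of `(x, y)` under the diagonal action of the automorphism
group. -/
def SameOrbit {V : Type} (G : SimpleGraph V) (x y v w : V) : Prop :=
  ∃ φ : G ≃g G, φ x = v ∧ φ y = w

/-- The restrictions of automorphisms of `G` to the closed ball of radius `R` about `o`. This is
the coset space of the automorphism group modulo the pointwise stabilizer of that ball. -/
def ballMaps {V : Type} (G : SimpleGraph V) (o : V) (R : ℕ) :
    Set ({v : V // G.dist o v ≤ R} → V) :=
  Set.range fun (φ : G ≃g G) t => φ t

/-- The elements of `ballMaps` sending `x` to `v`. -/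
def fib {V : Type} (G : SimpleGraph V) (o : V) (R : ℕ)
    (x : {v : V // G.dist o v ≤ R}) (v : V) : Set ({v : V // G.dist o v ≤ R} → V) :=
  {q | q ∈ ballMaps G o R ∧ q x = v}

section
variable {V : Type} {G : SimpleGraph V}

/-! ### Distances and balls -/

lemma exists_pred (hconn : G.Connected) {o z : V} {n : ℕ} (h : G.dist o z = n + 1) :
    ∃ y, G.Adj y z ∧ G.dist o y = n := by
  obtain ⟨p, hp⟩ := hconn.exists_walk_length_eq_dist z o
  rw [SimpleGraph.dist_comm, h] at hp
  cases p with
  | nil => simp at hp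
  | @cons _ y _ hadj p' =>
    refine ⟨y, hadj.symm, ?_⟩
    have h1 : G.dist y o ≤ p'.length := SimpleGraph.dist_le p'
    have h2 : G.dist o z ≤ G.dist o y + G.dist y z := hconn.dist_triangle
    have h3 : G.dist y z = 1 := SimpleGraph.dist_eq_one_iff_adj.2 hadj.symm
    rw [SimpleGraph.Walk.length_cons] at hp
    rw [SimpleGraph.dist_comm] at h1
    omega

lemma ball_finite (hconn : G.Connected) (hfin : ∀ v : V, (G.neighborSet v).Finite)
    (o : V) (n : ℕ) : {v | G.dist o v ≤ n}.Finite := by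
  induction n with
  | zero =>
    refine (Set.finite_singleton o).subset ?_
    intro v hv
    have : G.dist o v = 0 := by simpa using hv
    exact (hconn.dist_eq_zero_iff.1 this).symm
  | succ n ih =>
    refine (ih.union (ih.biUnion fun u _ => hfin u)).subset ?_
    intro v hv
    rcases Nat.lt_or_ge n (G.dist o v) with h | h
    · obtain ⟨y, hy, hd⟩ := exists_pred hconn (le_antisymm hv h)
      exact Or.inr (Set.mem_biUnion (show G.dist o y ≤ n from hd.le) hy)
    · exact Or.inl h

lemma iso_dist_le (hconn : G.Connected) (φ : G ≃g G) (u v : V) :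
    G.dist (φ u) (φ v) ≤ G.dist u v := by
  obtain ⟨p, hp⟩ := hconn.exists_walk_length_eq_dist u v
  rw [← hp, ← SimpleGraph.Walk.length_map φ.toHom p]
  exact SimpleGraph.dist_le _

/-! ### The perimeter counts each boundary edge twice -/

lemma outBoundary_finite (hfin : ∀ v : V, (G.neighborSet v).Finite) {E : Set V}
    (hE : E.Finite) : (outBoundary G E).Finite := by
  refine (hE.prod (hE.biUnion fun u _ => hfin u)).subset ?_
  rintro ⟨v, w⟩ ⟨h1, h2, h3⟩
  exact ⟨h2, Set.mem_biUnion h2 h1⟩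

open Classical in
lemma edgePerim_eq (hfin : ∀ v : V, (G.neighborSet v).Finite) {E : Set V}
    (hE : E.Finite) : edgePerim G E = 2 * (outBoundary G E).ncard := by
  set U : Finset V := (hE.union (hE.biUnion fun u _ => hfin u)).toFinset with hU
  have hUE : ∀ v ∈ E, v ∈ U := fun v hv => by
    rw [hU, Set.Finite.mem_toFinset]; exact Or.inl hv
  have hUN : ∀ v ∈ E, ∀ w, G.Adj v w → w ∈ U := fun v hv w hw => by
    rw [hU, Set.Finite.mem_toFinset]; exact Or.inr (Set.mem_biUnion hv hw)
  let D : V → V → ℝ := fun v w => if (v, w) ∈ outBoundary G E then 1 else 0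
  have hD : ∀ v w, D v w ≠ 0 → v ∈ U ∧ w ∈ U := by
    intro v w h
    have : (v, w) ∈ outBoundary G E := by
      by_contra h'
      exact h (if_neg h')
    exact ⟨hUE _ this.2.1, hUN _ this.2.1 _ this.1⟩
  have hgrad : ∀ m, gradAbs G (E.indicator (fun _ => (1 : ℝ))) m
      = ∑ n ∈ U, (D m n + D n m) := by
    intro m
    rw [← finsum_eq_sum_of_support_subset]
    · unfold gradAbs
      refine finsum_congr fun n => ?_
      by_cases hadj : G.Adj m n
      · have hadj' := hadj.symm
        rw [finsum_eq_if, if_pos (show n ∈ G.neighborSet m from hadj)]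
        by_cases hm : m ∈ E <;> by_cases hn : n ∈ E <;>
          simp [D, outBoundary, hm, hn, hadj, hadj']
      · have hadj' : ¬ G.Adj n m := fun h => hadj h.symm
        rw [finsum_eq_if, if_neg (show ¬ n ∈ G.neighborSet m from hadj)]
        simp [D, outBoundary, hadj, hadj']
    · intro n hn
      by_contra hnU
      apply hn
      have h1 : D m n = 0 := by
        by_contra h
        exact hnU (hD _ _ h).2
      have h2 : D n m = 0 := by
        by_contra h
        exact hnU (hD _ _ h).1
      simp [h1, h2]
  have hsum : edgePerim G E = ∑ m ∈ U, ∑ n ∈ U, (D m n + D n m) := by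
    unfold edgePerim
    rw [finsum_congr hgrad]
    apply finsum_eq_sum_of_support_subset
    intro m hm
    obtain ⟨n, -, hn⟩ := Finset.exists_ne_zero_of_sum_ne_zero hm
    by_contra hmU
    apply hn
    have h1 : D m n = 0 := by
      by_contra h
      exact hmU (hD _ _ h).1
    have h2 : D n m = 0 := by
      by_contra h
      exact hmU (hD _ _ h).2
    simp [h1, h2]
  have hcard : ∑ m ∈ U, ∑ n ∈ U, D m n = (outBoundary G E).ncard := by
    have hset : outBoundary G E = ((U ×ˢ U).filter (· ∈ outBoundary G E) : Finset (V × V)) := by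
      ext ⟨v, w⟩
      simp only [Finset.coe_filter, Finset.mem_product, Set.mem_ofPred_eq]
      exact ⟨fun h => ⟨⟨hUE _ h.2.1, hUN _ h.2.1 _ h.1⟩, h⟩, fun h => h.2⟩
    rw [← Finset.sum_product', hset, Set.ncard_coe_finset, Finset.card_filter]
    push_cast
    exact Finset.sum_congr rfl fun p _ => rfl
  rw [hsum]
  simp only [Finset.sum_add_distrib]
  rw [Finset.sum_comm (f := fun m n => D n m), hcard]
  ring

/-! ### Orbits of edges -/

lemma sameOrbit_adj {x y v w : V} (hxy : G.Adj x y) (h : SameOrbit G x y v w) : G.Adj v w := by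
  obtain ⟨φ, rfl, rfl⟩ := h
  exact φ.map_adj_iff.2 hxy

lemma sameOrbit_swap {x y v w : V} : SameOrbit G y x w v ↔ SameOrbit G x y v w :=
  ⟨fun ⟨φ, h1, h2⟩ => ⟨φ, h2, h1⟩, fun ⟨φ, h1, h2⟩ => ⟨φ, h2, h1⟩⟩

lemma sameOrbit_map (ψ : G ≃g G) {x y v w : V} :
    SameOrbit G x y (ψ v) (ψ w) ↔ SameOrbit G x y v w := by
  constructor
  · rintro ⟨φ, h1, h2⟩
    exact ⟨φ.trans ψ.symm, by simp [h1], by simp [h2]⟩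
  · rintro ⟨φ, h1, h2⟩
    exact ⟨φ.trans ψ, by simp [h1], by simp [h2]⟩

/-- The out-degree in the orbit of `(x, y)` does not depend on the vertex. -/
lemma orbit_ncard (htrans : ∀ u v : V, ∃ φ : G ≃g G, φ u = v) (x y v : V) :
    {w | SameOrbit G x y v w}.ncard = {w | SameOrbit G x y x w}.ncard := by
  obtain ⟨ψ, rfl⟩ := htrans x v
  rw [← Set.ncard_image_of_injective {w | SameOrbit G x y x w} ψ.injective]
  congr 1
  ext w
  constructor
  · intro h
    refine ⟨ψ.symm w, ?_, by simp⟩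
    rw [Set.mem_ofPred_eq, ← sameOrbit_map ψ]
    simpa using h
  · rintro ⟨w, h, rfl⟩
    exact (sameOrbit_map ψ).2 h

open Classical in
/-- Counting the edges of one orbit that start in `E` against those that end in `E`: the two
counts differ by at most the number of boundary edges. Here the out-degree is `a`, the in-degree
is `b`, and `a |E| ≤ b |E| + |∂E|`. -/
lemma orbit_expand (hfin : ∀ v : V, (G.neighborSet v).Finite)
    (htrans : ∀ u v : V, ∃ φ : G ≃g G, φ u = v) {E : Set V} (hE : E.Finite) {x y : V}
    (hxy : G.Adj x y) :
    {w | SameOrbit G x y x w}.ncard * E.ncard ≤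
      {v | SameOrbit G x y v y}.ncard * E.ncard + (outBoundary G E).ncard := by
  have hA : {p : V × V | SameOrbit G x y p.1 p.2 ∧ p.1 ∈ E}.Finite := by
    refine (hE.prod (hE.biUnion fun u _ => hfin u)).subset ?_
    rintro ⟨v, w⟩ ⟨h1, h2⟩
    exact ⟨h2, Set.mem_biUnion h2 (sameOrbit_adj hxy h1)⟩
  have hB : {p : V × V | SameOrbit G x y p.1 p.2 ∧ p.2 ∈ E}.Finite := by
    refine ((hE.biUnion fun u _ => hfin u).prod hE).subset ?_
    rintro ⟨v, w⟩ ⟨h1, h2⟩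
    exact ⟨Set.mem_biUnion h2 (sameOrbit_adj hxy h1).symm, h2⟩
  have hO := outBoundary_finite hfin hE
  have hsub : hA.toFinset ⊆ hB.toFinset ∪ hO.toFinset := by
    rintro ⟨v, w⟩ h
    simp only [Set.Finite.mem_toFinset, Set.mem_ofPred_eq, Finset.mem_union] at h ⊢
    by_cases hw : w ∈ E
    · exact Or.inl ⟨h.1, hw⟩
    · exact Or.inr ⟨sameOrbit_adj hxy h.1, h.2, hw⟩
  have hAc : hA.toFinset.card = hE.toFinset.card * {w | SameOrbit G x y x w}.ncard := by
    rw [Finset.card_eq_sum_card_fiberwise (f := Prod.fst) (t := hE.toFinset)]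
    · apply Finset.sum_const_nat
      intro v hv
      rw [← orbit_ncard htrans x y v, ← Set.ncard_coe_finset,
        ← Set.ncard_image_of_injective {w | SameOrbit G x y v w} (Prod.mk_right_injective v)]
      congr 1
      ext ⟨v', w⟩
      simp only [Finset.coe_filter, Set.Finite.mem_toFinset, Set.mem_ofPred_eq, Set.mem_image,
        Prod.mk.injEq] at hv ⊢
      constructor
      · rintro ⟨⟨h1, h2⟩, rfl⟩
        exact ⟨w, h1, rfl, rfl⟩
      · rintro ⟨w, h1, rfl, rfl⟩
        exact ⟨⟨h1, hv⟩, rfl⟩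
    · rintro ⟨v, w⟩ h
      simp only [Set.Finite.coe_toFinset, Set.mem_ofPred_eq] at h ⊢
      exact h.2
  have hBc : hB.toFinset.card = hE.toFinset.card * {v | SameOrbit G x y v y}.ncard := by
    rw [Finset.card_eq_sum_card_fiberwise (f := Prod.snd) (t := hE.toFinset)]
    · apply Finset.sum_const_nat
      intro w hw
      have hcnt := orbit_ncard htrans y x w
      simp only [sameOrbit_swap] at hcnt
      rw [← hcnt, ← Set.ncard_coe_finset,
        ← Set.ncard_image_of_injective {v | SameOrbit G x y v w} (Prod.mk_left_injective w)]
      congr 1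
      ext ⟨v, w'⟩
      simp only [Finset.coe_filter, Set.Finite.mem_toFinset, Set.mem_ofPred_eq, Set.mem_image,
        Prod.mk.injEq] at hw ⊢
      constructor
      · rintro ⟨⟨h1, h2⟩, rfl⟩
        exact ⟨v, h1, rfl, rfl⟩
      · rintro ⟨v, h1, rfl, rfl⟩
        exact ⟨⟨h1, hw⟩, rfl⟩
    · rintro ⟨v, w⟩ h
      simp only [Set.Finite.coe_toFinset, Set.mem_ofPred_eq] at h ⊢
      exact h.2
  have hle := (Finset.card_le_card hsub).trans (Finset.card_union_le _ _)
  rw [hAc, hBc, ← Set.ncard_eq_toFinset_card E hE, ← Set.ncard_eq_toFinset_card _ hO] at hle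
  rw [mul_comm, mul_comm _ E.ncard]
  exact hle

/-- An unbalanced edge orbit forces Cheeger constant at least one. -/
lemma unbalanced_expand (hfin : ∀ v : V, (G.neighborSet v).Finite)
    (htrans : ∀ u v : V, ∃ φ : G ≃g G, φ u = v) {E : Set V} (hE : E.Finite) {x y : V}
    (hxy : G.Adj x y)
    (hne : {w | SameOrbit G x y x w}.ncard ≠ {v | SameOrbit G x y v y}.ncard) :
    E.ncard ≤ (outBoundary G E).ncard := by
  have h1 := orbit_expand hfin htrans hE hxy
  have h2 := orbit_expand hfin htrans hE hxy.symm
  simp only [sameOrbit_swap] at h2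
  rcases Nat.lt_or_gt_of_ne hne with h | h
  · nlinarith
  · nlinarith

/-! ### Restrictions of automorphisms to a ball -/

variable {o : V} {R : ℕ}

lemma comp_mem_ballMaps (ψ : G ≃g G) {q : {v : V // G.dist o v ≤ R} → V}
    (hq : q ∈ ballMaps G o R) : (fun t => ψ (q t)) ∈ ballMaps G o R := by
  obtain ⟨φ, rfl⟩ := hq
  exact ⟨φ.trans ψ, rfl⟩

lemma fib_finite (hconn : G.Connected) (hfin : ∀ v : V, (G.neighborSet v).Finite)
    (x : {v : V // G.dist o v ≤ R}) (v : V) : (fib G o R x v).Finite := by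
  have : Finite {v : V // G.dist o v ≤ R} := (ball_finite hconn hfin o R).to_subtype
  refine (Set.Finite.pi' (t := fun t : {v : V // G.dist o v ≤ R} =>
    {w | G.dist v w ≤ G.dist (x : V) t}) fun t => ball_finite hconn hfin _ _).subset ?_
  rintro q ⟨⟨φ, rfl⟩, rfl⟩ t
  exact iso_dist_le hconn φ _ _

/-- Composition with an automorphism identifies the joint fibres over `(v, w)` and
`(ψ v, ψ w)`. -/
lemma fib2_ncard (x y : {v : V // G.dist o v ≤ R}) (ψ : G ≃g G) (v w : V) :
    (fib G o R x (ψ v) ∩ fib G o R y (ψ w)).ncard = (fib G o R x v ∩ fib G o R y w).ncard := by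
  have hinj : Function.Injective
      (fun (q : {v : V // G.dist o v ≤ R} → V) => (fun t => ψ (q t))) := by
    intro q q' h
    funext t
    exact ψ.injective (congrFun h t)
  rw [← Set.ncard_image_of_injective (fib G o R x v ∩ fib G o R y w) hinj]
  congr 1
  ext q
  constructor
  · rintro ⟨⟨hq, h1⟩, -, h2⟩
    refine ⟨fun t => ψ.symm (q t), ⟨⟨comp_mem_ballMaps ψ.symm hq, ?_⟩,
      comp_mem_ballMaps ψ.symm hq, ?_⟩, ?_⟩
    · simp [h1]
    · simp [h2]
    · funext t
      simp
  · rintro ⟨q, ⟨⟨hq, h1⟩, -, h2⟩, rfl⟩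
    exact ⟨⟨comp_mem_ballMaps ψ hq, by simp [h1]⟩, comp_mem_ballMaps ψ hq, by simp [h2]⟩

lemma fib_ncard (htrans : ∀ u v : V, ∃ φ : G ≃g G, φ u = v)
    (x : {v : V // G.dist o v ≤ R}) (v w : V) :
    (fib G o R x v).ncard = (fib G o R x w).ncard := by
  obtain ⟨ψ, rfl⟩ := htrans w v
  simpa using fib2_ncard x x ψ w w

open Classical in
/-- A fibre over `x` splits into joint fibres over `(x, y)`, one for each edge of the orbit of
`(x, y)` issuing from the given vertex, and these all have the same size. -/
lemma fib_ncard_eq_mul (hconn : G.Connected) (hfin : ∀ v : V, (G.neighborSet v).Finite)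
    (x y : {v : V // G.dist o v ≤ R}) (hxy : G.Adj (x : V) y) :
    (fib G o R x x).ncard = {w | SameOrbit G (x : V) y x w}.ncard *
      (fib G o R x x ∩ fib G o R y y).ncard := by
  have hF := fib_finite hconn hfin x x
  have hS : {w | SameOrbit G (x : V) y x w}.Finite :=
    (hfin x).subset fun w hw => sameOrbit_adj hxy hw
  rw [Set.ncard_eq_toFinset_card _ hF, Set.ncard_eq_toFinset_card _ hS,
    Finset.card_eq_sum_card_fiberwise (f := fun q => q y) (t := hS.toFinset)]
  · apply Finset.sum_const_nat
    intro w hw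
    rw [Set.Finite.mem_toFinset] at hw
    obtain ⟨ψ, h1, h2⟩ := hw
    rw [← fib2_ncard x y ψ, h1, h2, ← Set.ncard_coe_finset]
    congr 1
    ext q
    simp only [Finset.coe_filter, Set.Finite.mem_toFinset, Set.mem_ofPred_eq]
    exact ⟨fun h => ⟨h.1, h.1.1, h.2⟩, fun h => ⟨h.1, h.2.2⟩⟩
  · intro q hq
    rw [Set.Finite.coe_toFinset] at hq ⊢
    obtain ⟨⟨φ, rfl⟩, h⟩ := hq
    exact ⟨φ, h, rfl⟩

/-- If every edge orbit is balanced, then all fibres have the same size. -/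
lemma fib_ncard_const (hconn : G.Connected) (hfin : ∀ v : V, (G.neighborSet v).Finite)
    (htrans : ∀ u v : V, ∃ φ : G ≃g G, φ u = v)
    (hbal : ∀ x y : V, G.Adj x y →
      {w | SameOrbit G x y x w}.ncard = {v | SameOrbit G x y v y}.ncard)
    (n : ℕ) (z : {v : V // G.dist o v ≤ R}) (hz : G.dist o z = n) (v : V) :
    (fib G o R z v).ncard = (fib G o R ⟨o, by simp⟩ o).ncard := by
  induction n generalizing z v with
  | zero =>
    have : z = ⟨o, by simp⟩ := Subtype.ext (hconn.dist_eq_zero_iff.1 hz).symm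
    subst this
    exact fib_ncard htrans _ _ _
  | succ n ih =>
    obtain ⟨y, hy, hd⟩ := exists_pred hconn hz
    have hyR : G.dist o y ≤ R := by
      have := z.2
      omega
    rw [← ih ⟨y, hyR⟩ hd y, fib_ncard htrans z v z]
    have h1 := fib_ncard_eq_mul hconn hfin ⟨y, hyR⟩ z hy
    have h2 := fib_ncard_eq_mul hconn hfin z ⟨y, hyR⟩ hy.symm
    simp only [sameOrbit_swap] at h2
    rw [h1, h2, hbal _ _ hy, Set.inter_comm]

/-! ### The balanced case -/

open Classical in
/-- Averaging in the balanced case: among the restrictions `q` with `q o ∈ E`, those with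
`q z ∉ E` cross the boundary along the image of a geodesic from `o` to `z`. -/
lemma cross_le (hconn : G.Connected) (hfin : ∀ v : V, (G.neighborSet v).Finite)
    {E : Set V} (hE : E.Finite) (N : ℕ)
    (hN : ∀ (z : {v : V // G.dist o v ≤ R}) (v : V), (fib G o R z v).ncard = N)
    (Q : Finset ({v : V // G.dist o v ≤ R} → V))
    (hQ : ∀ q ∈ Q, q ∈ ballMaps G o R ∧ q ⟨o, by simp⟩ ∈ E)
    (n : ℕ) (z : {v : V // G.dist o v ≤ R}) (hz : G.dist o z = n) :
    (Q.filter fun q => q z ∉ E).card ≤ n * (N * (outBoundary G E).ncard) := by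
  induction n generalizing z with
  | zero =>
    have : z = ⟨o, by simp⟩ := Subtype.ext (hconn.dist_eq_zero_iff.1 hz).symm
    subst this
    rw [Finset.filter_false_of_mem fun q hq h => h (hQ q hq).2]
    simp
  | succ n ih =>
    obtain ⟨y, hy, hd⟩ := exists_pred hconn hz
    have hyR : G.dist o y ≤ R := by
      have := z.2
      omega
    have hsub : (Q.filter fun q => q z ∉ E) ⊆ (Q.filter fun q => q ⟨y, hyR⟩ ∉ E) ∪
        (Q.filter fun q => q ⟨y, hyR⟩ ∈ E ∧ q z ∉ E) := by
      intro q hq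
      simp only [Finset.mem_union, Finset.mem_filter] at hq ⊢
      tauto
    have hO := outBoundary_finite hfin hE
    have hstep : (Q.filter fun q => q ⟨y, hyR⟩ ∈ E ∧ q z ∉ E).card
        ≤ N * (outBoundary G E).ncard := by
      rw [Set.ncard_eq_toFinset_card _ hO]
      refine Finset.card_le_mul_card_image_of_maps_to (f := fun q => (q ⟨y, hyR⟩, q z)) ?_ N ?_
      · intro q hq
        rw [Finset.mem_filter] at hq
        obtain ⟨φ, rfl⟩ := (hQ q hq.1).1
        rw [Set.Finite.mem_toFinset]
        exact ⟨φ.map_adj_iff.2 hy, hq.2⟩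
      · rintro ⟨v, w⟩ -
        rw [← hN ⟨y, hyR⟩ v, Set.ncard_eq_toFinset_card _ (fib_finite hconn hfin _ _)]
        apply Finset.card_le_card
        intro q hq
        simp only [Finset.mem_filter, Prod.mk.injEq] at hq
        rw [Set.Finite.mem_toFinset]
        exact ⟨(hQ q hq.1.1).1, hq.2.1⟩
    calc _ ≤ _ := Finset.card_le_card hsub
      _ ≤ _ := Finset.card_union_le _ _
      _ ≤ n * (N * (outBoundary G E).ncard) + N * (outBoundary G E).ncard :=
        add_le_add (ih ⟨y, hyR⟩ hd) hstep
      _ = _ := by ring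

lemma average_arith {b k N r P : ℝ} (hb : 0 < b) (hN : 0 < N)
    (h : k * N * (b / 2) ≤ b * (r * (N * P))) : k ≤ 2 * r * P := by
  have h4 : b * N * k ≤ b * N * (2 * r * P) := by linarith
  exact le_of_mul_le_mul_left h4 (by positivity)

open Classical in
lemma balanced_expand (hconn : G.Connected) (hfin : ∀ v : V, (G.neighborSet v).Finite)
    (htrans : ∀ u v : V, ∃ φ : G ≃g G, φ u = v)
    (hbal : ∀ x y : V, G.Adj x y →
      {w | SameOrbit G x y x w}.ncard = {v | SameOrbit G x y v y}.ncard)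
    {E : Set V} (hE : E.Finite) (o : V) (r : ℝ) (hr : 1 ≤ r)
    (hhalf : 2 * E.encard ≤ {n | (G.dist o n : ℝ) < r}.encard) :
    (E.ncard : ℝ) ≤ 2 * r * (outBoundary G E).ncard := by
  set R : ℕ := ⌈r⌉₊ with hR
  have hfinT : Finite {v : V // G.dist o v ≤ R} := (ball_finite hconn hfin o R).to_subtype
  have : Fintype {v : V // G.dist o v ≤ R} := Fintype.ofFinite _
  let B : Finset {v : V // G.dist o v ≤ R} := Finset.univ.filter fun z => (G.dist o z : ℝ) < r
  let o' : {v : V // G.dist o v ≤ R} := ⟨o, by simp⟩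
  have hBcard : {n | (G.dist o n : ℝ) < r}.encard = B.card := by
    rw [← Set.encard_coe_eq_coe_finsetCard,
      ← Function.Injective.encard_image Subtype.val_injective]
    congr 1
    ext v
    simp only [B, Finset.coe_filter, Finset.mem_univ, true_and, Set.mem_image, Set.mem_ofPred_eq]
    constructor
    · intro h
      have : G.dist o v ≤ R := by
        exact_mod_cast h.le.trans (Nat.le_ceil r)
      exact ⟨⟨v, this⟩, h, rfl⟩
    · rintro ⟨z, h, rfl⟩
      exact h
  have hhalf' : 2 * E.ncard ≤ B.card := by
    rw [hBcard, ← hE.cast_ncard_eq] at hhalf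
    exact_mod_cast hhalf
  have hBpos : 0 < B.card := Finset.card_pos.2 ⟨o', by
    simp only [B, o', Finset.mem_filter, Finset.mem_univ, true_and, SimpleGraph.dist_self]
    norm_num
    linarith⟩
  set N := (fib G o R o' o).ncard with hNdef
  have hN : ∀ (z : {v : V // G.dist o v ≤ R}) (v : V), (fib G o R z v).ncard = N :=
    fun z v => fib_ncard_const hconn hfin htrans hbal _ z rfl v
  have hNpos : 0 < N := by
    rw [hNdef, Set.ncard_pos (fib_finite hconn hfin _ _)]
    exact ⟨fun t => t, ⟨SimpleGraph.Iso.refl, rfl⟩, rfl⟩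
  have hQfin : {q | q ∈ ballMaps G o R ∧ q o' ∈ E}.Finite := by
    refine (hE.biUnion fun v _ => fib_finite hconn hfin o' v).subset ?_
    rintro q ⟨h1, h2⟩
    exact Set.mem_biUnion h2 ⟨h1, rfl⟩
  set Q := hQfin.toFinset with hQdef
  have hQ : ∀ q ∈ Q, q ∈ ballMaps G o R ∧ q o' ∈ E := fun q hq => by
    simpa [hQdef] using hq
  have hQcard : Q.card = E.ncard * N := by
    rw [Set.ncard_eq_toFinset_card _ hE,
      Finset.card_eq_sum_card_fiberwise (f := fun q => q o') (t := hE.toFinset)]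
    · apply Finset.sum_const_nat
      intro v hv
      rw [← hN o' v, ← Set.ncard_coe_finset]
      congr 1
      ext q
      simp only [Set.Finite.mem_toFinset] at hv
      simp only [Finset.coe_filter, hQdef, Set.Finite.mem_toFinset, Set.mem_ofPred_eq, fib]
      constructor
      · rintro ⟨⟨h1, h2⟩, h3⟩
        exact ⟨h1, h3⟩
      · rintro ⟨h1, rfl⟩
        exact ⟨⟨h1, hv⟩, rfl⟩
    · intro q hq
      rw [Set.Finite.coe_toFinset]
      exact (hQ q hq).2
  set P := (outBoundary G E).ncard with hP
  -- Each `q` is injective, so at most `|E|` points of the ball are mapped into `E`.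
  have hlow : ∀ q ∈ Q, (B.card : ℝ) / 2 ≤ (B.filter fun z => q z ∉ E).card := by
    intro q hq
    obtain ⟨φ, hφ⟩ := (hQ q hq).1
    have hinj : Function.Injective q := by
      rw [← hφ]
      exact φ.injective.comp Subtype.val_injective
    have h1 : (B.filter fun z => q z ∈ E).card ≤ E.ncard := by
      rw [Set.ncard_eq_toFinset_card _ hE]
      refine Finset.card_le_card_of_injOn q ?_ hinj.injOn
      intro z hz
      simpa using (Finset.mem_filter.1 hz).2
    have h2 := Finset.card_filter_add_card_filter_not (s := B) (fun z => q z ∈ E)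
    have h3 : B.card ≤ 2 * (B.filter fun z => q z ∉ E).card := by omega
    have h4 : (B.card : ℝ) ≤ 2 * (B.filter fun z => q z ∉ E).card := by exact_mod_cast h3
    linarith
  have hcomm : ∑ q ∈ Q, ((B.filter fun z => q z ∉ E).card : ℝ)
      = ∑ z ∈ B, ((Q.filter fun q => q z ∉ E).card : ℝ) := by
    exact_mod_cast Finset.sum_card_bipartiteAbove_eq_sum_card_bipartiteBelow
      (s := Q) (t := B) (fun q z => q z ∉ E)
  have hup : ∀ z ∈ B, ((Q.filter fun q => q z ∉ E).card : ℝ) ≤ r * (N * P) := by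
    intro z hz
    have h1 := cross_le hconn hfin hE N hN Q hQ _ z rfl
    have h2 : ((Q.filter fun q => q z ∉ E).card : ℝ) ≤ (G.dist o z : ℝ) * (N * P) := by
      exact_mod_cast h1
    refine h2.trans ?_
    have := (Finset.mem_filter.1 hz).2
    gcongr
  have h1 := Finset.sum_le_sum hlow
  have h2 := Finset.sum_le_sum hup
  rw [hcomm] at h1
  have h3 := h1.trans h2
  rw [Finset.sum_const, Finset.sum_const, hQcard, nsmul_eq_mul, nsmul_eq_mul] at h3
  push_cast at h3
  have hNpos' : (0 : ℝ) < N := by exact_mod_cast hNpos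
  have hBpos' : (0 : ℝ) < B.card := by exact_mod_cast hBpos
  exact average_arith hBpos' hNpos' h3

end

/-- Weak isoperimetric inequality (discrete, infinite case, half-ball version): on a
connected, locally finite, countable, vertex-transitive graph with infinite vertex
set, if `E ⊆ V` has cardinality at most half of that of a ball of radius `r` (for
some real `r ≥ 1`), then `|E| ≤ r ‖∂E‖`. -/
theorem discrete_weak_isoperimetric_infinite_half
    (V : Type) (G : SimpleGraph V) (hcount : Countable V) (hconn : G.Connected)
    (hfin : ∀ v : V, (G.neighborSet v).Finite)
    (htrans : ∀ u v : V, ∃ φ : G ≃g G, φ u = v)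
    (hinf : Infinite V)
    (E : Set V) (r : ℝ) (hr : 1 ≤ r)
    (hE : ∀ m₀ : V, 2 * E.encard ≤ {n | (G.dist m₀ n : ℝ) < r}.encard) :
    (E.ncard : ℝ) ≤ r * edgePerim G E := by
  rcases E.finite_or_infinite with hEf | hEi
  swap
  · rw [hEi.ncard]
    have : 0 ≤ edgePerim G E :=
      finsum_nonneg fun m => finsum_nonneg fun n => finsum_nonneg fun _ => abs_nonneg _
    have : 0 ≤ r * edgePerim G E := mul_nonneg (by linarith) this
    simpa using this
  rw [edgePerim_eq hfin hEf]
  by_cases hbal : ∀ x y : V, G.Adj x y →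
      {w | SameOrbit G x y x w}.ncard = {v | SameOrbit G x y v y}.ncard
  · obtain ⟨o⟩ := hconn.nonempty
    have := balanced_expand hconn hfin htrans hbal hEf o r hr (hE o)
    linarith
  · push Not at hbal
    obtain ⟨x, y, hxy, hne⟩ := hbal
    have h1 : (E.ncard : ℝ) ≤ (outBoundary G E).ncard := by
      exact_mod_cast unbalanced_expand hfin htrans hEf hxy hne
    nlinarith [Nat.cast_nonneg (α := ℝ) (outBoundary G E).ncard]
end
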